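/- Fix k ≠ l and let m = m_{kl}. For every integer n ≥ 1 and every finite composition Ξ = D_{j_1} ∘ D_{j_2} ∘ ⋯ ∘ D_{j_p} of Demazure operators with each j_t ∈ {k, l} (including the empty composition, p = 0), the two elements Ξ(Δ_{k,l}) · G_kG_lG_k⋯ (alternating product of m + n factors starting with G_k) and Ξ(Δ_{k,l}) · G_lG_kG_l⋯ (alternating product of m + n factors starting with G_l) of 𝔇 both lie in the two-sided ideal (B) generated by the Coxeter braid relators. -/

import Mathlib

open scoped TensorProduct

noncomputable section

abbrev Vd (d : ℕ) := Fin d → ℂ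
abbrev Ad (d : ℕ) := MvPolynomial (Fin d) ℂ

/-- Action of `g ∈ GL(V)` on polynomials: substitute `X j ↦ (g⁻¹ x)_j`. -/
def glAct {d : ℕ} (g : GL (Fin d) ℂ) : Ad d →ₐ[ℂ] Ad d :=
  MvPolynomial.aeval fun j =>
    ∑ k, ((g⁻¹ : GL (Fin d) ℂ) : Matrix (Fin d) (Fin d) ℂ) j k • MvPolynomial.X k

/-- Embedding of linear forms on `V` as degree-one polynomials. -/
def lin {d : ℕ} (θ : Vd d →ₗ[ℂ] ℂ) : Ad d :=
  ∑ j, θ (Pi.single j 1) • MvPolynomial.X j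

structure CoxeterSetup (d n : ℕ) where
  Γ : Subgroup (GL (Fin d) ℂ)
  finite : Finite Γ
  s : Fin n → Γ
  gen : Subgroup.closure (Set.range s) = (⊤ : Subgroup Γ)
  α : Fin n → (Vd d →ₗ[ℂ] ℂ)
  coroot : Fin n → Vd d
  pairing : ∀ i, α i (coroot i) = 2
  refl : ∀ i (v : Vd d),
    ((s i : GL (Fin d) ℂ) : Matrix (Fin d) (Fin d) ℂ).mulVec v = v - α i v • coroot i


/-- The subalgebra of `Γ'`-invariant polynomials. -/
def FixedSub {d n : ℕ} (S : CoxeterSetup d n) (Γ' : Subgroup S.Γ) : Subalgebra ℂ (Ad d) where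
  carrier := {f | ∀ g ∈ Γ', glAct (g : GL (Fin d) ℂ) f = f}
  mul_mem' := fun hf hg g hgmem => by simp [map_mul, hf g hgmem, hg g hgmem]
  add_mem' := fun hf hg g hgmem => by simp [map_add, hf g hgmem, hg g hgmem]
  algebraMap_mem' := fun c g _ => by simp

/-- `M` (with `Γ'`-action `ρ`) descends to `A^{Γ'}`. -/
def Descends {d n : ℕ} (S : CoxeterSetup d n) (Γ' : Subgroup S.Γ) (M : Type)
    [AddCommGroup M] [Module ℂ M] [Module (Ad d) M] [IsScalarTower ℂ (Ad d) M]
    (ρ : Γ' →* Module.End ℂ M) : Prop :=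
  ∃ (N : Type) (_ : AddCommGroup N) (_ : Module (FixedSub S Γ') N)
    (e : ((Ad d) ⊗[FixedSub S Γ'] N) ≃ₗ[Ad d] M),
    ∀ (g : Γ') (a : Ad d) (x : N),
      ρ g (e (a ⊗ₜ x)) = e ((glAct ((g : S.Γ) : GL (Fin d) ℂ) a) ⊗ₜ x)


/-- Alternating product `x·y·x·⋯` with `m` factors, starting with `x`. -/
def altProd {M : Type*} [Monoid M] (x y : M) : ℕ → M
  | 0 => 1
  | (j + 1) => x * altProd y x j

/-- The order `m_{ij}` of `sᵢ sⱼ` in `Γ`. -/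
def mOrd {d n : ℕ} (S : CoxeterSetup d n) (i j : Fin n) : ℕ :=
  orderOf (S.s i * S.s j)

/-- Relations presenting the Demazure descent algebra `𝔇`: the inclusion of `A` is a
`ℂ`-algebra map, `Gᵢ² = 0`, and `Gᵢ·θ = θ(αᵢ^∨) + sᵢ(θ)·Gᵢ` for linear forms `θ`. -/
inductive DRel {d n : ℕ} (S : CoxeterSetup d n) :
    FreeAlgebra ℂ (Ad d ⊕ Fin n) → FreeAlgebra ℂ (Ad d ⊕ Fin n) → Prop
  | add (a b : Ad d) :
      DRel S (FreeAlgebra.ι ℂ (Sum.inl a) + FreeAlgebra.ι ℂ (Sum.inl b))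
        (FreeAlgebra.ι ℂ (Sum.inl (a + b)))
  | mul (a b : Ad d) :
      DRel S (FreeAlgebra.ι ℂ (Sum.inl a) * FreeAlgebra.ι ℂ (Sum.inl b))
        (FreeAlgebra.ι ℂ (Sum.inl (a * b)))
  | scalar (c : ℂ) :
      DRel S (algebraMap ℂ _ c) (FreeAlgebra.ι ℂ (Sum.inl (algebraMap ℂ (Ad d) c)))
  | sq (i : Fin n) :
      DRel S (FreeAlgebra.ι ℂ (Sum.inr i) * FreeAlgebra.ι ℂ (Sum.inr i)) 0
  | straighten (i : Fin n) (θ : Vd d →ₗ[ℂ] ℂ) :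
      DRel S (FreeAlgebra.ι ℂ (Sum.inr i) * FreeAlgebra.ι ℂ (Sum.inl (lin θ)))
        (algebraMap ℂ _ (θ (S.coroot i)) +
          FreeAlgebra.ι ℂ (Sum.inl (glAct ((S.s i : S.Γ) : GL (Fin d) ℂ) (lin θ))) *
            FreeAlgebra.ι ℂ (Sum.inr i))

/-- The Demazure descent algebra `𝔇`. -/
abbrev DD {d n : ℕ} (S : CoxeterSetup d n) := RingQuot (DRel S)

/-- The generator `Gᵢ ∈ 𝔇`. -/
def GG {d n : ℕ} (S : CoxeterSetup d n) (i : Fin n) : DD S :=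
  RingQuot.mkRingHom (DRel S) (FreeAlgebra.ι ℂ (Sum.inr i))

/-- The canonical ring homomorphism `A → 𝔇`. -/
def ofA {d n : ℕ} (S : CoxeterSetup d n) : Ad d →+* DD S where
  toFun a := RingQuot.mkRingHom (DRel S) (FreeAlgebra.ι ℂ (Sum.inl a))
  map_one' := by
    have h := RingQuot.mkRingHom_rel (DRel.scalar (S := S) 1)
    simpa using h.symm
  map_mul' a b := by
    exact ((RingQuot.mkRingHom_rel (DRel.mul (S := S) a b)).symm).trans (map_mul _ _ _)
  map_zero' := by
    have h := RingQuot.mkRingHom_rel (DRel.scalar (S := S) 0)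
    simpa using h.symm
  map_add' a b := by
    exact ((RingQuot.mkRingHom_rel (DRel.add (S := S) a b)).symm).trans (map_add _ _ _)

/-- The element `σᵢ := 1 − αᵢ·Gᵢ ∈ 𝔇`. -/
def sigmaD {d n : ℕ} (S : CoxeterSetup d n) (i : Fin n) : DD S :=
  1 - ofA S (lin (S.α i)) * GG S i

/-- The set of Coxeter braid relators `B_{ij}`. -/
def coxeterBraidSet {d n : ℕ} (S : CoxeterSetup d n) : Set (DD S) :=
  {x | ∃ i j : Fin n, i ≠ j ∧
    x = altProd (sigmaD S i) (sigmaD S j) (mOrd S i j) -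
        altProd (sigmaD S j) (sigmaD S i) (mOrd S i j)}

/-- The set of Demazure braid relators `B^D_{ij}`. -/
def demazureBraidSet {d n : ℕ} (S : CoxeterSetup d n) : Set (DD S) :=
  {x | ∃ i j : Fin n, i ≠ j ∧
    x = altProd (GG S i) (GG S j) (mOrd S i j) -
        altProd (GG S j) (GG S i) (mOrd S i j)}

/-- The product in `𝔇` of the generators `G` along a word. -/
def wordProd {d n : ℕ} (S : CoxeterSetup d n) (w : List (Fin n)) : DD S :=
  (w.map (GG S)).prod

/-- The sequence of roots `α_k, s_k(α_l), s_k s_l(α_k), …` as degree-one polynomials. -/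
def rootSeqP {d n : ℕ} (S : CoxeterSetup d n) (k l : Fin n) (j : ℕ) : Ad d :=
  glAct ((altProd (S.s k) (S.s l) j : S.Γ) : GL (Fin d) ℂ)
    (lin (S.α (if Even j then k else l)))

/-- `Δ_{k,l}`, the product of the `m_{kl}` roots `α_k, s_k(α_l), s_k s_l(α_k), …`. -/
def DeltaP {d n : ℕ} (S : CoxeterSetup d n) (k l : Fin n) : Ad d :=
  ∏ j ∈ Finset.range (mOrd S k l), rootSeqP S k l j



section AltAux
variable {M : Type*} [Monoid M]

def revAlt (x y : M) : ℕ → M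
  | 0 => 1
  | (j + 1) => revAlt y x j * x

theorem revAlt_left (x y : M) (j : ℕ) :
    revAlt x y (j+1) = (if Even j then x else y) * revAlt x y j := by
  induction j generalizing x y with
  | zero => simp [revAlt]
  | succ j ih =>
    rw [revAlt, ih y x, revAlt, mul_assoc]
    congr 1
    by_cases h : Even j <;> simp [h, Nat.even_add_one]

theorem altProd_eq_revAlt (x y : M) (j : ℕ) :
    altProd x y j = if Even j then revAlt y x j else revAlt x y j := by
  induction j generalizing x y with
  | zero => simp [revAlt, altProd]
  | succ j ih =>
    rw [altProd, ih y x]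
    by_cases h : Even j
    · simp [h, Nat.even_add_one, revAlt_left]
    · simp [h, Nat.even_add_one, revAlt_left]

theorem altProd_right (x y : M) (j : ℕ) :
    altProd x y (j+1) = altProd x y j * (if Even j then x else y) := by
  induction j generalizing x y with
  | zero => simp [altProd]
  | succ j ih =>
    rw [altProd, ih y x, altProd, mul_assoc]
    congr 2
    by_cases h : Even j <;> simp [h, Nat.even_add_one]

theorem altProd_add (x y : M) (i j : ℕ) :
    ∃ t, altProd x y (i+j) = altProd x y i * t := by
  induction j with
  | zero => exact ⟨1, by simp⟩
  | succ j ih =>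
    obtain ⟨t, ht⟩ := ih
    refine ⟨t * (if Even (i+j) then x else y), ?_⟩
    rw [← add_assoc, altProd_right, ht, mul_assoc]

theorem altProd_map {N : Type*} [Monoid N] (f : M →* N) (x y : M) (j : ℕ) :
    f (altProd x y j) = altProd (f x) (f y) j := by
  induction j generalizing x y with
  | zero => simp [altProd]
  | succ j ih => simp [altProd, ih]

theorem altProd_pow (x y : M) (hx : x * x = 1) (hy : y * y = 1) (n : ℕ) :
    altProd x y n = (x * y) ^ n * altProd y x n := by
  induction n generalizing x y with
  | zero => simp [altProd]
  | succ n ih =>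
    have h1 : x * (y * x) ^ n = (x * y)^n * x := by
      clear ih
      induction n with
      | zero => simp
      | succ n ih => rw [pow_succ, ← mul_assoc, ih, pow_succ]; simp only [mul_assoc]
    have h2 : (x * y)^(n+1) * y = (x*y)^n * x := by
      rw [pow_succ, mul_assoc, mul_assoc, hy, mul_one]
    rw [altProd, ih y x hy hx, altProd, ← mul_assoc, ← mul_assoc, h1, h2]

theorem altProd_last_zero {R : Type*} [Ring R] (x y : R) (hx : x * x = 0) (hy : y * y = 0)
    (m : ℕ) (hm : 1 ≤ m) : altProd y x m * (if Even m then x else y) = 0 := by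
  obtain ⟨j, rfl⟩ : ∃ j, m = j + 1 := ⟨m - 1, by omega⟩
  rw [altProd_right, mul_assoc]
  by_cases h : Even j <;> simp [h, Nat.even_add_one, hx, hy]

end AltAux

section Geo
variable {d n : ℕ}

theorem lin_eval (θ : Vd d →ₗ[ℂ] ℂ) (v : Vd d) : MvPolynomial.eval v (lin θ) = θ v := by
  have hv : v = ∑ j, v j • (Pi.single j (1:ℂ) : Vd d) := by
    ext i; simp [Finset.sum_apply, Pi.single_apply]
  conv_rhs => rw [hv, map_sum]
  simp only [lin, map_sum, MvPolynomial.smul_eval, MvPolynomial.eval_X, map_smul, smul_eq_mul]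
  exact Finset.sum_congr rfl fun j _ => mul_comm _ _

theorem lin_add (a b : Vd d →ₗ[ℂ] ℂ) : lin (a + b) = lin a + lin b := by
  simp [lin, add_smul, Finset.sum_add_distrib]
theorem lin_smul (c : ℂ) (b : Vd d →ₗ[ℂ] ℂ) : lin (c • b) = c • lin b := by
  simp [lin, mul_smul, Finset.smul_sum]
theorem lin_sub (a b : Vd d →ₗ[ℂ] ℂ) : lin (a - b) = lin a - lin b := by
  simp [lin, sub_smul, Finset.sum_sub_distrib]
theorem lin_inj {a b : Vd d →ₗ[ℂ] ℂ} (h : lin a = lin b) : a = b := by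
  apply LinearMap.ext; intro v; rw [← lin_eval, ← lin_eval, h]
theorem lin_proj (j : Fin d) : lin (LinearMap.proj j : Vd d →ₗ[ℂ] ℂ) = MvPolynomial.X j := by
  simp [lin, Pi.single_apply]

theorem lin_homog (θ : Vd d →ₗ[ℂ] ℂ) : (lin θ).IsHomogeneous 1 := by
  refine MvPolynomial.IsHomogeneous.sum _ _ _ fun j _ => ?_
  rw [MvPolynomial.smul_eq_C_mul]
  simpa using (MvPolynomial.isHomogeneous_C (Fin d) _).mul (MvPolynomial.isHomogeneous_X ℂ j)

theorem glAct_lin (g : GL (Fin d) ℂ) (θ : Vd d →ₗ[ℂ] ℂ) :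
    glAct g (lin θ) = lin (θ ∘ₗ Matrix.mulVecLin ((g⁻¹ : GL (Fin d) ℂ) : Matrix (Fin d) (Fin d) ℂ)) := by
  apply MvPolynomial.funext
  intro v
  rw [lin_eval]
  have : ∀ f : Ad d, MvPolynomial.eval v (glAct g f) = MvPolynomial.eval
      (((g⁻¹ : GL (Fin d) ℂ) : Matrix (Fin d) (Fin d) ℂ).mulVec v) f := by
    intro f
    induction f using MvPolynomial.induction_on with
    | C a => simp [glAct]
    | add p q hp hq => simp [hp, hq]
    | mul_X p j hp => simp [hp]; left; simp [glAct, Matrix.mulVec, dotProduct]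
  rw [this, lin_eval]; rfl

theorem glAct_mul (g h : GL (Fin d) ℂ) : glAct (g * h) = (glAct g).comp (glAct h) := by
  apply MvPolynomial.algHom_ext
  intro j
  rw [← lin_proj, AlgHom.comp_apply, glAct_lin, glAct_lin, glAct_lin]
  congr 1
  apply LinearMap.ext; intro v
  simp

theorem glAct_one : glAct (1 : GL (Fin d) ℂ) = AlgHom.id ℂ _ := by
  apply MvPolynomial.algHom_ext
  intro j
  rw [← lin_proj, glAct_lin]
  simp

theorem totalDegree_glAct (g : GL (Fin d) ℂ) (f : Ad d) :
    (glAct g f).totalDegree ≤ f.totalDegree := by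
  rw [MvPolynomial.as_sum f, map_sum]
  refine (MvPolynomial.totalDegree_finsetSum _ _).trans ?_
  rw [← MvPolynomial.as_sum f]
  refine Finset.sup_le fun s hs => ?_
  refine le_trans ?_ (MvPolynomial.le_totalDegree hs)
  have hm : (MvPolynomial.monomial s (f.coeff s)).IsHomogeneous s.degree :=
    MvPolynomial.isHomogeneous_monomial _ rfl
  have := hm.aeval (fun j => glAct g (MvPolynomial.X j)) (n := 1) (fun j => by
    rw [← lin_proj, glAct_lin]; exact lin_homog _)
  have h2 : MvPolynomial.aeval (fun j => glAct g (MvPolynomial.X j)) = glAct g := by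
    apply MvPolynomial.algHom_ext; intro j; simp
  rw [h2, one_mul] at this
  exact this.totalDegree_le

end Geo

section Setup
variable {d n : ℕ} (S : CoxeterSetup d n)

theorem s_sq (i : Fin n) : S.s i * S.s i = 1 := by
  apply Subtype.ext
  apply Units.ext
  apply Matrix.toLin'.injective
  apply LinearMap.ext
  intro v
  simp only [Subgroup.coe_mul, Units.val_mul, Matrix.toLin'_apply, ← Matrix.mulVec_mulVec, S.refl,
    map_sub, map_smul, S.pairing]
  simp
  module

theorem s_inv (i : Fin n) : ((S.s i : GL (Fin d) ℂ))⁻¹ = S.s i := by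
  have := congrArg (Subtype.val) (s_sq S i)
  exact inv_eq_of_mul_eq_one_left this

theorem act_lin (i : Fin n) (θ : Vd d →ₗ[ℂ] ℂ) :
    glAct (S.s i : GL (Fin d) ℂ) (lin θ) = lin θ - θ (S.coroot i) • lin (S.α i) := by
  rw [glAct_lin, s_inv, ← lin_smul, ← lin_sub]
  congr 1
  apply LinearMap.ext
  intro v
  simp [S.refl, mul_comm]

theorem alpha_ne (i : Fin n) : lin (S.α i) ≠ 0 := by
  intro h
  have h0 : lin (S.α i) = lin 0 := by rw [h]; simp [lin]
  have := S.pairing i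
  rw [lin_inj h0] at this
  simp at this

/-- Group representation on polynomials. -/
def actHom : S.Γ →* Module.End ℂ (Ad d) where
  toFun g := (glAct (g : GL (Fin d) ℂ)).toLinearMap
  map_one' := by
    simp [glAct_one]; rfl
  map_mul' g h := by
    simp [glAct_mul]; rfl

theorem act_act (i : Fin n) (f : Ad d) :
    glAct (S.s i : GL (Fin d) ℂ) (glAct (S.s i : GL (Fin d) ℂ) f) = f := by
  rw [← AlgHom.comp_apply, ← glAct_mul]
  have := congrArg (Subtype.val) (s_sq S i)
  rw [Subgroup.coe_mul] at this
  rw [this]; simp [glAct_one]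

theorem GG_sq (i : Fin n) : GG S i * GG S i = 0 := by
  have h := RingQuot.mkRingHom_rel (DRel.sq (S := S) i)
  rw [map_mul, map_zero] at h
  exact h

variable (D : Fin n → Ad d → Ad d)
    (hD : ∀ (i : Fin n) (f : Ad d),
      lin (S.α i) * D i f = f - glAct ((S.s i : S.Γ) : GL (Fin d) ℂ) f)

/-- The Demazure operator as linear map. -/
def DL (hD : ∀ (i : Fin n) (f : Ad d),
      lin (S.α i) * D i f = f - glAct ((S.s i : S.Γ) : GL (Fin d) ℂ) f) (i : Fin n) :
    Module.End ℂ (Ad d) where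
  toFun := D i
  map_add' f g := by
    apply mul_left_cancel₀ (alpha_ne S i)
    rw [mul_add, hD, hD, hD, map_add]; ring
  map_smul' c f := by
    apply mul_left_cancel₀ (alpha_ne S i)
    rw [mul_smul_comm, hD, hD, map_smul, RingHom.id_apply, smul_sub]

include hD

theorem DL_spec (i : Fin n) (f : Ad d) :
    lin (S.α i) * DL S D hD i f = f - glAct ((S.s i : S.Γ) : GL (Fin d) ℂ) f := hD i f

theorem DL_mul (i : Fin n) (f g : Ad d) :
    DL S D hD i (f * g) = DL S D hD i f * g +
      glAct ((S.s i : S.Γ) : GL (Fin d) ℂ) f * DL S D hD i g := by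
  apply mul_left_cancel₀ (alpha_ne S i)
  have h1 := DL_spec S D hD i f
  have h2 := DL_spec S D hD i g
  have h3 := DL_spec S D hD i (f * g)
  rw [map_mul (glAct _)] at h3
  linear_combination h3 - g * h1 - glAct ((S.s i : S.Γ) : GL (Fin d) ℂ) f * h2

theorem DL_inv (i : Fin n) (f : Ad d) (hf : glAct ((S.s i : S.Γ) : GL (Fin d) ℂ) f = f) :
    DL S D hD i f = 0 := by
  apply mul_left_cancel₀ (alpha_ne S i)
  rw [DL_spec, hf]; simp

theorem DL_lin (i : Fin n) (θ : Vd d →ₗ[ℂ] ℂ) :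
    DL S D hD i (lin θ) = MvPolynomial.C (θ (S.coroot i)) := by
  apply mul_left_cancel₀ (alpha_ne S i)
  rw [DL_spec, act_lin, MvPolynomial.smul_eq_C_mul]; ring

theorem DL_sq (i : Fin n) : DL S D hD i * DL S D hD i = 0 := by
  apply LinearMap.ext
  intro f
  apply DL_inv S D hD
  change glAct ((S.s i : S.Γ) : GL (Fin d) ℂ) (DL S D hD i f) = DL S D hD i f
  apply mul_left_cancel₀ (alpha_ne S i)
  have h1 := DL_spec S D hD i f
  have h2 := congrArg (glAct ((S.s i : S.Γ) : GL (Fin d) ℂ)) h1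
  rw [map_mul, map_sub, act_act, act_lin, S.pairing, two_smul] at h2
  linear_combination -h1 - h2

theorem DL_deg (i : Fin n) (f : Ad d) :
    DL S D hD i f = 0 ∨ (DL S D hD i f).totalDegree + 1 ≤ f.totalDegree := by
  by_cases h : DL S D hD i f = 0
  · exact Or.inl h
  right
  have h1 := congrArg MvPolynomial.totalDegree (DL_spec S D hD i f)
  rw [MvPolynomial.totalDegree_mul_of_isDomain (alpha_ne S i) h,
    (lin_homog _).totalDegree (alpha_ne S i)] at h1
  have h2 := MvPolynomial.totalDegree_sub f (glAct ((S.s i : S.Γ) : GL (Fin d) ℂ) f)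
  have h3 := totalDegree_glAct ((S.s i : S.Γ) : GL (Fin d) ℂ) f
  rw [max_eq_left h3] at h2
  omega

theorem altDL_deg (k l : Fin n) (j : ℕ) (f : Ad d) :
    altProd (DL S D hD k) (DL S D hD l) j f = 0 ∨
      (altProd (DL S D hD k) (DL S D hD l) j f).totalDegree + j ≤ f.totalDegree := by
  induction j generalizing k l with
  | zero => right; simp [altProd]
  | succ j ih =>
    rw [altProd, Module.End.mul_apply]
    rcases ih l k with h | h
    · left; rw [h, map_zero]
    · rcases DL_deg S D hD k (altProd (DL S D hD l) (DL S D hD k) j f) with h' | h'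
      · exact Or.inl h'
      · right; omega

theorem altDL_zero (k l : Fin n) (j : ℕ) (f : Ad d) (hf : f.totalDegree < j) :
    altProd (DL S D hD k) (DL S D hD l) j f = 0 := by
  rcases altDL_deg S D hD k l j f with h | h
  · exact h
  · omega

theorem GG_straight (i : Fin n) (f : Ad d) :
    GG S i * ofA S f = ofA S (DL S D hD i f) +
      ofA S (glAct ((S.s i : S.Γ) : GL (Fin d) ℂ) f) * GG S i := by
  have hC : ∀ c : ℂ, ofA S (MvPolynomial.C c) =
      RingQuot.mkRingHom (DRel S) (algebraMap ℂ _ c) := fun c =>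
    (RingQuot.mkRingHom_rel (DRel.scalar (S := S) c)).symm
  have hlin : ∀ θ, GG S i * ofA S (lin θ) = ofA S (DL S D hD i (lin θ)) +
      ofA S (glAct ((S.s i : S.Γ) : GL (Fin d) ℂ) (lin θ)) * GG S i := by
    intro θ
    rw [DL_lin, hC]
    have h := RingQuot.mkRingHom_rel (DRel.straighten (S := S) i θ)
    rw [map_mul, map_add, map_mul] at h
    exact h
  induction f using MvPolynomial.induction_on with
  | C a =>
    have h0 : glAct ((S.s i : S.Γ) : GL (Fin d) ℂ) (MvPolynomial.C a) = MvPolynomial.C a := by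
      simp [glAct]
    rw [DL_inv S D hD i _ h0, h0, map_zero, zero_add, hC, GG, ← map_mul, ← map_mul,
      Algebra.commutes]
  | add p q hp hq =>
    simp only [map_add, mul_add, add_mul, hp, hq]; abel
  | mul_X p j hp =>
    rw [map_mul, ← mul_assoc, hp, DL_mul, add_mul, mul_assoc, ← lin_proj, hlin]
    simp only [map_add, map_mul, mul_add, mul_assoc, add_assoc]

theorem sigma_straight (i : Fin n) (f : Ad d) :
    sigmaD S i * ofA S f = ofA S (glAct ((S.s i : S.Γ) : GL (Fin d) ℂ) f) * sigmaD S i := by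
  have h := DL_spec S D hD i f
  have h' := congrArg (ofA S) h
  rw [map_mul, map_sub] at h'
  rw [sigmaD, sub_mul, mul_assoc, GG_straight S D hD, mul_add, h', mul_sub, one_mul, mul_one,
    ← mul_assoc, ← mul_assoc, ← map_mul, ← map_mul, mul_comm (lin (S.α i))]
  abel

end Setup

section Expand
variable {d n : ℕ} (S : CoxeterSetup d n)

/-- Coefficients of `σ`-words in terms of `G`-words. -/
def cf (k l : Fin n) : ℕ → ℕ → Ad d × Ad d
  | 0, j => (if j = 0 then 1 else 0, 0)
  | (_ + 1), 0 => (1, 0)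
  | (N + 1), (j + 1) =>
    (glAct ((S.s k : S.Γ) : GL (Fin d) ℂ) (cf l k N (j+1)).2 -
      lin (S.α k) * glAct ((S.s k : S.Γ) : GL (Fin d) ℂ) (cf l k N j).1,
     glAct ((S.s k : S.Γ) : GL (Fin d) ℂ) (cf l k N (j+1)).1)

theorem cf_zero (k l : Fin n) (N : ℕ) : cf S k l N 0 = (1, 0) := by
  cases N <;> simp [cf]

theorem cf_large (k l : Fin n) (N : ℕ) : (∀ j, N < j → (cf S k l N j).1 = 0) ∧
    (∀ j, 0 < j → N ≤ j → (cf S k l N j).2 = 0) := by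
  induction N generalizing k l with
  | zero => exact ⟨fun j hj => by simp [cf]; omega, fun j _ _ => by simp [cf]⟩
  | succ N ih =>
    obtain ⟨h1, h2⟩ := ih l k
    refine ⟨fun j hj => ?_, fun j h0 hj => ?_⟩
    · obtain ⟨j, rfl⟩ : ∃ i, j = i + 1 := ⟨j - 1, by omega⟩
      simp [cf, h1 j (by omega), h2 (j+1) (by omega) (by omega)]
    · obtain ⟨j, rfl⟩ : ∃ i, j = i + 1 := ⟨j - 1, by omega⟩
      simp [cf, h1 (j+1) (by omega)]

theorem rootSeqP_succ (k l : Fin n) (j : ℕ) : rootSeqP S k l (j+1) =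
    glAct ((S.s k : S.Γ) : GL (Fin d) ℂ) (rootSeqP S l k j) := by
  rw [rootSeqP, altProd, Subgroup.coe_mul, glAct_mul, AlgHom.comp_apply, rootSeqP]
  by_cases h : Even j <;> simp [h, Nat.even_add_one]

theorem cf_lead (k l : Fin n) (N : ℕ) : (cf S k l N N).1 =
    (-1)^N * ∏ j ∈ Finset.range N, rootSeqP S k l j := by
  induction N generalizing k l with
  | zero => simp [cf]
  | succ N ih =>
    have h0 : rootSeqP S k l 0 = lin (S.α k) := by simp [rootSeqP, altProd, glAct_one]
    rw [Finset.prod_range_succ', h0, cf, ih l k, (cf_large S l k N).2 (N+1) (by omega) (by omega)]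
    simp only [rootSeqP_succ, map_mul, map_prod, map_pow, map_neg, map_one, map_zero]
    ring

theorem expand {R : Type*} [Ring R] (φ : Ad d →+* R) (g : Fin n → R)
    (hg : ∀ i, g i * g i = 0)
    (hs : ∀ i f, (1 - φ (lin (S.α i)) * g i) * φ f =
      φ (glAct ((S.s i : S.Γ) : GL (Fin d) ℂ) f) * (1 - φ (lin (S.α i)) * g i))
    (k l : Fin n) (N : ℕ) :
    altProd (1 - φ (lin (S.α k)) * g k) (1 - φ (lin (S.α l)) * g l) N =
      ∑ j ∈ Finset.range (N+1), (φ (cf S k l N j).1 * altProd (g k) (g l) j +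
        φ (cf S k l N j).2 * altProd (g l) (g k) j) := by
  induction N generalizing k l with
  | zero => simp [cf, altProd]
  | succ N ih =>
    rw [altProd, ih l k, Finset.mul_sum, Finset.sum_range_succ']
    have e1 : ∀ j, (1 - φ (lin (S.α k)) * g k) * (φ (cf S l k N j).1 * altProd (g l) (g k) j) =
      φ (glAct ((S.s k : S.Γ) : GL (Fin d) ℂ) (cf S l k N j).1) * altProd (g l) (g k) j
      - φ (lin (S.α k) * glAct ((S.s k : S.Γ) : GL (Fin d) ℂ) (cf S l k N j).1)
          * altProd (g k) (g l) (j+1) := by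
      intro j
      rw [← mul_assoc, hs, mul_assoc, sub_mul, one_mul, mul_sub, altProd, mul_comm (lin _), map_mul]
      simp only [mul_assoc]
    have e2 : ∀ j, (1 - φ (lin (S.α k)) * g k) * (φ (cf S l k N (j+1)).2 * altProd (g k) (g l) (j+1)) =
      φ (glAct ((S.s k : S.Γ) : GL (Fin d) ℂ) (cf S l k N (j+1)).2) * altProd (g k) (g l) (j+1) := by
      intro j
      rw [← mul_assoc, hs, mul_assoc, altProd, sub_mul, one_mul, mul_assoc, ← mul_assoc (g k), hg]
      simp
    have e3 : ∀ j, φ (cf S k l (N+1) (j+1)).1 * altProd (g k) (g l) (j+1) +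
        φ (cf S k l (N+1) (j+1)).2 * altProd (g l) (g k) (j+1) =
        ((1 - φ (lin (S.α k)) * g k) * (φ (cf S l k N (j+1)).1 * altProd (g l) (g k) (j+1)) +
         (1 - φ (lin (S.α k)) * g k) * (φ (cf S l k N (j+1)).2 * altProd (g k) (g l) (j+1))) +
        (φ (lin (S.α k) * glAct ((S.s k : S.Γ) : GL (Fin d) ℂ) (cf S l k N (j+1)).1)
          * altProd (g k) (g l) (j+2) -
         φ (lin (S.α k) * glAct ((S.s k : S.Γ) : GL (Fin d) ℂ) (cf S l k N j).1)
          * altProd (g k) (g l) (j+1)) := by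
      intro j
      rw [e1, e2, cf]
      simp only [map_sub, sub_mul]
      abel
    rw [Finset.sum_range_succ' _ (N+1), Finset.sum_congr rfl (fun j _ => e3 j),
      Finset.sum_add_distrib, Finset.sum_range_sub (fun j =>
        φ (lin (S.α k) * glAct ((S.s k : S.Γ) : GL (Fin d) ℂ) (cf S l k N j).1)
          * altProd (g k) (g l) (j+1))]
    rw [Finset.sum_range_succ _ N]
    have l1 := (cf_large S l k N).1 (N+1) (by omega)
    have l2 := (cf_large S l k N).2 (N+1) (by omega) (by omega)
    simp only [l1, l2, cf_zero, mul_add, map_zero, mul_zero, zero_mul, map_one, mul_one, one_mul,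
      add_zero, altProd, zero_sub, ]
    abel

end Expand

section Eig
variable {d n : ℕ} (S : CoxeterSetup d n)

/-- Dual reflection. -/
def sd (i : Fin n) : Module.End ℂ (Vd d →ₗ[ℂ] ℂ) where
  toFun θ := θ - θ (S.coroot i) • S.α i
  map_add' a b := by simp only [LinearMap.add_apply]; module
  map_smul' c a := by simp only [LinearMap.smul_apply, smul_eq_mul, RingHom.id_apply]; module

theorem sd_apply (i : Fin n) (θ : Vd d →ₗ[ℂ] ℂ) : sd S i θ = θ - θ (S.coroot i) • S.α i := rfl

theorem sd_lin (i : Fin n) (θ : Vd d →ₗ[ℂ] ℂ) :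
    lin (sd S i θ) = glAct (S.s i : GL (Fin d) ℂ) (lin θ) := by
  rw [act_lin, sd_apply, lin_sub, lin_smul]

theorem sd_sd (i : Fin n) (θ : Vd d →ₗ[ℂ] ℂ) : sd S i (sd S i θ) = θ := by
  apply lin_inj; rw [sd_lin, sd_lin, act_act]

theorem T_lin (k l : Fin n) (j : ℕ) (θ : Vd d →ₗ[ℂ] ℂ) :
    lin (((sd S k * sd S l) ^ j) θ) = glAct (((S.s k * S.s l) ^ j : S.Γ) : GL (Fin d) ℂ) (lin θ) := by
  induction j generalizing θ with
  | zero => simp [glAct_one]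
  | succ j ih =>
    rw [pow_succ, Module.End.mul_apply, ih, pow_succ, Subgroup.coe_mul, glAct_mul,
      Module.End.mul_apply, sd_lin, sd_lin, Subgroup.coe_mul, glAct_mul]
    rfl

theorem T_one_iff (k l : Fin n) (j : ℕ) :
    (sd S k * sd S l) ^ j = 1 ↔ (S.s k * S.s l) ^ j = 1 := by
  constructor
  · intro h
    apply Subtype.ext
    rw [← inv_inj]
    apply Units.ext
    apply Matrix.toLin'.injective
    apply LinearMap.ext
    intro v
    funext i
    have h1 := T_lin S k l j (LinearMap.proj i)
    rw [h, glAct_lin] at h1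
    have h2 := LinearMap.congr_fun (lin_inj h1) v
    rw [Matrix.toLin'_apply, Matrix.toLin'_apply]
    simpa using h2.symm
  · intro h
    apply LinearMap.ext
    intro θ
    apply lin_inj
    rw [T_lin, h]
    simp [glAct_one]

theorem pow_eig {V : Type*} [AddCommGroup V] [Module ℂ V] (T : Module.End ℂ V) (x : V) (c : ℂ)
    (h : T x = c • x) (j : ℕ) : (T ^ j) x = c ^ j • x := by
  induction j with
  | zero => simp
  | succ j ih => rw [pow_succ, Module.End.mul_apply, h, map_smul, ih, smul_smul, pow_succ, mul_comm]

theorem exists_eig {V : Type*} [AddCommGroup V] [Module ℂ V] [FiniteDimensional ℂ V]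
    (T : Module.End ℂ V) (m : ℕ) (hm : 0 < m) (hT : T ^ m = 1) (h1 : T ≠ 1) :
    ∃ (ζ : ℂ) (x : V), ζ ≠ 1 ∧ x ≠ 0 ∧ T x = ζ • x := by
  by_contra hcon
  push Not at hcon
  apply h1
  have hss : T.IsSemisimple := by
    refine Module.End.isSemisimple_of_squarefree_aeval_eq_zero
      (p := Polynomial.X ^ m - 1) ?_ (by simp [hT])
    apply Polynomial.Separable.squarefree
    rw [Polynomial.X_pow_sub_one_separable_iff]
    exact_mod_cast hm.ne'
  have htop := Module.End.iSup_maxGenEigenspace_eq_top T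
  have hle : (⨆ μ, T.maxGenEigenspace μ) ≤ T.eigenspace 1 := by
    refine iSup_le fun μ => ?_
    rw [hss.isFinitelySemisimple.maxGenEigenspace_eq_eigenspace]
    intro x hx
    rw [Module.End.mem_eigenspace_iff] at hx
    by_cases hμ : μ = 1
    · subst hμ; rw [Module.End.mem_eigenspace_iff]; exact hx
    · by_cases hx0 : x = 0
      · subst hx0; exact Submodule.zero_mem _
      · exact absurd hx (hcon μ x hμ hx0)
  rw [htop] at hle
  apply LinearMap.ext
  intro x
  have := hle (Submodule.mem_top (x := x))
  rw [Module.End.mem_eigenspace_iff] at this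
  simpa using this

theorem alpha_ne' (i : Fin n) : S.α i ≠ 0 := by
  intro h; apply alpha_ne S i; rw [h]; simp [lin]

theorem pair_zero_l (k l : Fin n) (m : ℕ) (hm : 0 < m) (hT : (sd S k * sd S l) ^ m = 1)
    (hb : S.α l (S.coroot k) = 0) : S.α k (S.coroot l) = 0 := by
  have key : ∀ j : ℕ, ((sd S k * sd S l) ^ j) (S.α k) =
      (-1 : ℂ)^j • (S.α k + (j * S.α k (S.coroot l)) • S.α l) := by
    intro j
    induction j with
    | zero => simp
    | succ j ih =>
      rw [pow_succ', Module.End.mul_apply, ih]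
      simp only [map_smul, map_add, Module.End.mul_apply, sd_apply, S.pairing, LinearMap.sub_apply,
        LinearMap.smul_apply, hb, map_sub]
      push_cast
      rw [pow_succ]
      module
  have h := key m
  rw [hT, Module.End.one_apply] at h
  have h2 := LinearMap.congr_fun h (S.coroot k)
  simp [hb, S.pairing] at h2
  rw [h2, one_smul] at h
  simpa [alpha_ne', hm.ne'] using h

theorem pair_zero_k (k l : Fin n) (m : ℕ) (hm : 0 < m) (hT : (sd S k * sd S l) ^ m = 1)
    (ha : S.α k (S.coroot l) = 0) : S.α l (S.coroot k) = 0 := by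
  have key : ∀ j : ℕ, ((sd S k * sd S l) ^ j) (S.α l) =
      (-1 : ℂ)^j • (S.α l - (j * S.α l (S.coroot k)) • S.α k) := by
    intro j
    induction j with
    | zero => simp
    | succ j ih =>
      rw [pow_succ', Module.End.mul_apply, ih]
      simp only [map_smul, map_sub, Module.End.mul_apply, sd_apply, S.pairing, LinearMap.sub_apply,
        LinearMap.smul_apply, ha]
      push_cast
      rw [pow_succ]
      module
  have h := key m
  rw [hT, Module.End.one_apply] at h
  have h2 := LinearMap.congr_fun h (S.coroot l)
  simp [ha, S.pairing] at h2
  rw [h2, one_smul] at h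
  have h3 : ((m:ℂ) * S.α l (S.coroot k)) • S.α k = 0 := by
    rw [eq_comm, sub_eq_self] at h; exact h
  simpa [alpha_ne', hm.ne'] using h3

theorem exists_zeta (k l : Fin n) (m : ℕ) (hm : 0 < m) (hT : (sd S k * sd S l) ^ m = 1)
    (h1 : sd S k * sd S l ≠ 1) :
    ∃ (ζ : ℂ) (z : Vd d →ₗ[ℂ] ℂ), ζ ≠ 1 ∧ ζ ≠ 0 ∧ sd S l z = ζ • sd S k z ∧
      z (S.coroot k) ≠ 0 ∧ z (S.coroot l) ≠ 0 := by
  have hab : S.α l (S.coroot k) = 0 → S.α k (S.coroot l) = 0 →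
    ∃ (ζ : ℂ) (z : Vd d →ₗ[ℂ] ℂ), ζ ≠ 1 ∧ ζ ≠ 0 ∧ sd S l z = ζ • sd S k z ∧
      z (S.coroot k) ≠ 0 ∧ z (S.coroot l) ≠ 0 := by
    intro hb ha
    refine ⟨-1, S.α k + S.α l, by norm_num, by norm_num, ?_, ?_, ?_⟩
    · simp only [sd_apply, LinearMap.add_apply, S.pairing, ha, hb]; module
    · simp [S.pairing, hb]
    · simp [S.pairing, ha]
  obtain ⟨ζ, z, hζ, hz, hTz⟩ := exists_eig _ m hm hT h1
  have hζ0 : ζ ≠ 0 := by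
    rintro rfl
    have := pow_eig _ _ _ hTz m
    rw [hT, zero_pow hm.ne', zero_smul] at this
    exact hz this
  have hl : sd S l z = ζ • sd S k z := by
    rw [Module.End.mul_apply] at hTz
    rw [← map_smul, ← hTz, sd_sd]
  by_cases hp : z (S.coroot k) = 0
  · have hb : S.α l (S.coroot k) = 0 := by
      rw [sd_apply, sd_apply, hp] at hl
      have h3 := LinearMap.congr_fun hl (S.coroot k)
      simp [hp] at h3
      rcases h3 with h3 | h3
      · exfalso
        rw [h3] at hl
        simp at hl
        have : (1 - ζ) • z = 0 := by rw [sub_smul, one_smul, ← hl, sub_self]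
        rcases smul_eq_zero.1 this with h | h
        · exact hζ (sub_eq_zero.1 h).symm
        · exact hz h
      · exact h3
    exact hab hb (pair_zero_l S k l m hm hT hb)
  by_cases hr : z (S.coroot l) = 0
  · have ha : S.α k (S.coroot l) = 0 := by
      rw [sd_apply, sd_apply, hr] at hl
      have h3 := LinearMap.congr_fun hl (S.coroot l)
      simp [hr, hζ0, hp] at h3
      exact h3
    exact hab (pair_zero_k S k l m hm hT ha) ha
  exact ⟨ζ, z, hζ, hζ0, hl, hp, hr⟩

theorem zeta_prim (k l : Fin n) (ζ : ℂ) (z : Vd d →ₗ[ℂ] ℂ) (hζ : ζ ≠ 1) (hζ0 : ζ ≠ 0)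
    (hl : sd S l z = ζ • sd S k z)
    (hp : z (S.coroot k) ≠ 0) (hr : z (S.coroot l) ≠ 0) (j : ℕ) (hj : ζ ^ j = 1) :
    (sd S k * sd S l) ^ j = 1 := by
  have hzb : sd S l (sd S k z) = ζ⁻¹ • z := by
    have : sd S l (sd S l z) = ζ • sd S l (sd S k z) := by rw [hl, map_smul]
    rw [sd_sd] at this
    conv_rhs => rw [this]
    rw [smul_smul, inv_mul_cancel₀ hζ0, one_smul]
  have e1 : (sd S k * sd S l) z = ζ • z := by
    rw [Module.End.mul_apply, hl, map_smul, sd_sd]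
  have e2 : (sd S k * sd S l) (sd S k z) = ζ⁻¹ • sd S k z := by
    rw [Module.End.mul_apply, hzb, map_smul]
  have v1 : (sd S k z) (S.coroot k) = - z (S.coroot k) := by
    simp [sd_apply, S.pairing]; ring
  have v2 : (sd S k z) (S.coroot l) = - ζ⁻¹ * z (S.coroot l) := by
    have : (sd S l z) (S.coroot l) = - z (S.coroot l) := by
      simp [sd_apply, S.pairing]; ring
    rw [hl, LinearMap.smul_apply, smul_eq_mul] at this
    field_simp
    linear_combination this
  apply LinearMap.ext
  intro θ
  have hne : 1 - ζ⁻¹ ≠ 0 := by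
    intro h; apply hζ; field_simp at h; linear_combination h
  obtain ⟨c2, hc2⟩ : ∃ c2, c2 * (1 - ζ⁻¹) = θ (S.coroot l) / z (S.coroot l) -
      θ (S.coroot k) / z (S.coroot k) := ⟨_ / (1 - ζ⁻¹), div_mul_cancel₀ _ hne⟩
  obtain ⟨u, hu⟩ : ∃ u, u * z (S.coroot k) = θ (S.coroot k) := ⟨_, div_mul_cancel₀ _ hp⟩
  obtain ⟨w, hw⟩ : ∃ w, w * z (S.coroot l) = θ (S.coroot l) := ⟨_, div_mul_cancel₀ _ hr⟩
  rw [← hu, ← hw, mul_div_cancel_right₀ _ hp, mul_div_cancel_right₀ _ hr] at hc2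
  set η := θ - (u + c2) • z - c2 • sd S k z with hη
  have n1 : η (S.coroot k) = 0 := by
    simp only [hη, LinearMap.sub_apply, LinearMap.smul_apply, v1, smul_eq_mul]
    linear_combination -hu
  have n2 : η (S.coroot l) = 0 := by
    simp only [hη, LinearMap.sub_apply, LinearMap.smul_apply, v2, smul_eq_mul]
    linear_combination -hw - z (S.coroot l) * hc2
  have e3 : (sd S k * sd S l) η = (1:ℂ) • η := by
    rw [Module.End.mul_apply, sd_apply S l, n2, zero_smul, sub_zero, sd_apply, n1]; simp
  have hθ : θ = η + (u + c2) • z + c2 • sd S k z := by rw [hη]; module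
  rw [hθ]
  simp only [map_add, map_smul, pow_eig _ _ _ e1, pow_eig _ _ _ e2, pow_eig _ _ _ e3, hj, inv_pow]
  simp

end Eig

section Chain
variable {d n : ℕ} (S : CoxeterSetup d n)

theorem geo_aux {A : Type*} [CommRing A] [Algebra ℂ A] (z w : A) (j : ℕ) :
    ∃ (e : ℂ) (r : A), e ≠ 0 ∧ z^(j+1) - w^(j+1) =
      (z - w) * (algebraMap ℂ A e * (z^j + w^j) + z * w * r) := by
  cases j with
  | zero =>
    refine ⟨1/2, 0, by norm_num, ?_⟩
    have : algebraMap ℂ A (1/2) * 2 = 1 := by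
      have h := (map_mul (algebraMap ℂ A) (1/2) 2).symm
      rw [map_ofNat] at h
      rw [h]; norm_num
    linear_combination (w - z) * this
  | succ j =>
    obtain ⟨r, hr⟩ := sub_dvd_pow_sub_pow z w j
    refine ⟨1, r, one_ne_zero, ?_⟩
    rw [map_one]
    linear_combination z * w * hr

variable (D : Fin n → Ad d → Ad d)
    (hD : ∀ (i : Fin n) (f : Ad d),
      lin (S.α i) * D i f = f - glAct ((S.s i : S.Γ) : GL (Fin d) ℂ) f)
include hD

open MvPolynomial in
theorem gen_step (i : Fin n) (z zb : Ad d) (a η μ : ℂ) (ha : a ≠ 0) (hη : η ≠ 0)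
    (hα : C a * lin (S.α i) = z - C η * zb)
    (h1 : glAct ((S.s i : S.Γ) : GL (Fin d) ℂ) z = C η * zb)
    (h2 : glAct ((S.s i : S.Γ) : GL (Fin d) ℂ) zb = C η⁻¹ * z)
    (j : ℕ) (hμ : μ ≠ η ^ (j+1)) :
    ∃ (c : ℂ) (r : Ad d), c ≠ 0 ∧ DL S D hD i (z^(j+1) + C μ * zb^(j+1)) =
      C c * (z^j + C (η^j) * zb^j) + z * zb * r := by
  obtain ⟨e, r, he, hr⟩ := geo_aux z (C η * zb) j
  rw [MvPolynomial.algebraMap_eq] at hr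
  have hκ : 1 - μ * (η⁻¹)^(j+1) ≠ 0 := by
    intro h
    apply hμ
    have : μ * (η⁻¹)^(j+1) * η^(j+1) = μ := by
      rw [mul_assoc, ← mul_pow, inv_mul_cancel₀ hη, one_pow, mul_one]
    rw [← this, ← sub_eq_zero.1 h, one_mul]
  refine ⟨(1 - μ * (η⁻¹)^(j+1)) * a * e, C ((1 - μ * (η⁻¹)^(j+1)) * a * η) * r,
    mul_ne_zero (mul_ne_zero hκ ha) he, ?_⟩
  apply mul_left_cancel₀ (alpha_ne S i)
  rw [DL_spec]
  have hC : glAct ((S.s i : S.Γ) : GL (Fin d) ℂ) (C μ) = C μ := by simp [glAct]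
  rw [map_add, map_mul, map_pow, map_pow, h1, h2, hC]
  have hinv : (C η⁻¹ : Ad d) * C η = 1 := by rw [← C_mul, inv_mul_cancel₀ hη, C_1]
  have hinv' : (C η⁻¹ : Ad d) ^ (j+1) * C η ^ (j+1) = 1 := by rw [← mul_pow, hinv, one_pow]
  rw [← hα] at hr
  simp only [C_mul, C_sub, C_1, C_pow, mul_pow] at hr ⊢
  linear_combination (1 - C μ * C η⁻¹^(j+1)) * hr - C μ * zb^(j+1) * hinv'

open MvPolynomial in
theorem chain (k l : Fin n) (z zb : Ad d) (a b ζ : ℂ) (ha : a ≠ 0) (hb : b ≠ 0) (hζ : ζ ≠ 0)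
    (hαk : C a * lin (S.α k) = z - zb)
    (hαl : C b * lin (S.α l) = z - C ζ * zb)
    (hk1 : glAct ((S.s k : S.Γ) : GL (Fin d) ℂ) z = zb)
    (hk2 : glAct ((S.s k : S.Γ) : GL (Fin d) ℂ) zb = z)
    (hl1 : glAct ((S.s l : S.Γ) : GL (Fin d) ℂ) z = C ζ * zb)
    (hl2 : glAct ((S.s l : S.Γ) : GL (Fin d) ℂ) zb = C ζ⁻¹ * z)
    (hq : ∀ c : ℂ, c ≠ 0 → ¬ (z * zb ∣ (C c : Ad d)))
    (m : ℕ) (hm : ∀ j, 0 < j → j < m → ζ ^ j ≠ 1) (j : ℕ) (hj : j < m) :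
    ¬ (z * zb ∣ revAlt (DL S D hD l) (DL S D hD k) j (z^j + zb^j)) ∧
    ¬ (z * zb ∣ revAlt (DL S D hD k) (DL S D hD l) j (z^j + C (ζ^j) * zb^j)) ∧
    ¬ (z * zb ∣ revAlt (DL S D hD l) (DL S D hD k) (j+1) (z^(j+1))) ∧
    ¬ (z * zb ∣ revAlt (DL S D hD k) (DL S D hD l) (j+1) (z^(j+1))) := by
  have hqk : glAct ((S.s k : S.Γ) : GL (Fin d) ℂ) (z * zb) = z * zb := by
    rw [map_mul, hk1, hk2, mul_comm]
  have hql : glAct ((S.s l : S.Γ) : GL (Fin d) ℂ) (z * zb) = z * zb := by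
    rw [map_mul, hl1, hl2]
    have hinv : (C ζ : Ad d) * C ζ⁻¹ = 1 := by rw [← C_mul, mul_inv_cancel₀ hζ, C_1]
    linear_combination z * zb * hinv
  have Dq : ∀ i, glAct ((S.s i : S.Γ) : GL (Fin d) ℂ) (z * zb) = z * zb → ∀ f,
      DL S D hD i (z * zb * f) = z * zb * DL S D hD i f := by
    intro i hi f
    rw [DL_mul, DL_inv S D hD i _ hi, hi, zero_mul, zero_add]
  have Rq : ∀ j f, revAlt (DL S D hD l) (DL S D hD k) j (z * zb * f) =
        z * zb * revAlt (DL S D hD l) (DL S D hD k) j f ∧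
      revAlt (DL S D hD k) (DL S D hD l) j (z * zb * f) =
        z * zb * revAlt (DL S D hD k) (DL S D hD l) j f := by
    intro j
    induction j with
    | zero => intro f; simp [revAlt]
    | succ j ih =>
      intro f
      simp only [revAlt, Module.End.mul_apply, Dq k hqk, Dq l hql]
      exact ⟨(ih _).2, (ih _).1⟩
  suffices main : ¬ (z * zb ∣ revAlt (DL S D hD l) (DL S D hD k) j (z^j + zb^j)) ∧
      ¬ (z * zb ∣ revAlt (DL S D hD k) (DL S D hD l) j (z^j + C (ζ^j) * zb^j)) by
    obtain ⟨ih1, ih2⟩ := main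
    refine ⟨ih1, ih2, ?_, ?_⟩
    · obtain ⟨c, r, hc, h⟩ := gen_step S D hD l z zb b ζ 0 hb hζ hαl hl1 hl2 j
        (pow_ne_zero _ hζ).symm
      rw [C_0, zero_mul, add_zero] at h
      rw [revAlt, Module.End.mul_apply, h, map_add, (Rq _ _).2, ← smul_eq_C_mul, map_smul,
        dvd_add_left (Dvd.intro _ rfl)]
      intro hdvd
      apply ih2
      have := hdvd.mul_left (C c⁻¹)
      rw [← smul_eq_C_mul, smul_smul, inv_mul_cancel₀ hc, one_smul] at this
      exact this
    · obtain ⟨c, r, hc, h⟩ := gen_step S D hD k z zb a 1 0 ha one_ne_zero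
        (by simpa using hαk) (by simpa using hk1) (by simpa using hk2) j
        (by simp)
      rw [one_pow, C_0, C_1, one_mul, zero_mul, add_zero] at h
      rw [revAlt, Module.End.mul_apply, h, map_add, (Rq _ _).1, ← smul_eq_C_mul (_ + _), map_smul,
        dvd_add_left (Dvd.intro _ rfl)]
      intro hdvd
      apply ih1
      have := hdvd.mul_left (C c⁻¹)
      rw [← smul_eq_C_mul, smul_smul, inv_mul_cancel₀ hc, one_smul] at this
      exact this
  induction j with
  | zero =>
    have h2 := hq 2 two_ne_zero
    have : (C 2 : Ad d) = 1 + 1 := by rw [← C_1, ← C_add]; norm_num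
    rw [this] at h2
    simpa [revAlt] using h2
  | succ j ih =>
    obtain ⟨ih1, ih2⟩ := ih (by omega)
    constructor
    · obtain ⟨c, r, hc, h⟩ := gen_step S D hD l z zb b ζ 1 hb hζ hαl hl1 hl2 j
        (hm (j+1) (by omega) hj).symm
      rw [C_1, one_mul] at h
      rw [revAlt, Module.End.mul_apply, h, map_add, (Rq _ _).2, ← smul_eq_C_mul, map_smul,
        dvd_add_left (Dvd.intro _ rfl)]
      intro hdvd
      apply ih2
      have := hdvd.mul_left (C c⁻¹)
      rw [← smul_eq_C_mul, smul_smul, inv_mul_cancel₀ hc, one_smul] at this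
      exact this
    · obtain ⟨c, r, hc, h⟩ := gen_step S D hD k z zb a 1 (ζ^(j+1)) ha one_ne_zero
        (by simpa using hαk) (by simpa using hk1) (by simpa using hk2) j
        (by simpa using (hm (j+1) (by omega) hj))
      rw [one_pow, C_1, one_mul] at h
      rw [revAlt, Module.End.mul_apply, h, map_add, (Rq _ _).1, ← smul_eq_C_mul (_ + _), map_smul,
        dvd_add_left (Dvd.intro _ rfl)]
      intro hdvd
      apply ih1
      have := hdvd.mul_left (C c⁻¹)
      rw [← smul_eq_C_mul, smul_smul, inv_mul_cancel₀ hc, one_smul] at this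
      exact this

end Chain

section Test
variable {d n : ℕ} (S : CoxeterSetup d n)

open MvPolynomial in
theorem exists_test (D : Fin n → Ad d → Ad d)
    (hD : ∀ (i : Fin n) (f : Ad d),
      lin (S.α i) * D i f = f - glAct ((S.s i : S.Γ) : GL (Fin d) ℂ) f)
    (k l : Fin n) (m : ℕ) (hm : mOrd S k l = m) (h0 : 0 < m) :
    (∀ j, 0 < j → j < m → ∃ f g : Ad d, f.totalDegree ≤ j ∧ g.totalDegree ≤ j ∧
      altProd (DL S D hD k) (DL S D hD l) j f ≠ 0 ∧
      altProd (DL S D hD l) (DL S D hD k) j f = 0 ∧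
      altProd (DL S D hD k) (DL S D hD l) j g = 0 ∧
      altProd (DL S D hD l) (DL S D hD k) j g ≠ 0) ∧
    ∃ f : Ad d, f.totalDegree ≤ m ∧ altProd (DL S D hD k) (DL S D hD l) m f ≠ 0 := by
  by_cases h1 : m = 1
  · subst h1
    refine ⟨fun j _ _ => by omega, lin (S.α k), (lin_homog _).totalDegree_le, ?_⟩
    rw [altProd, altProd, mul_one, DL_lin, S.pairing]
    simp
  have hpow : (S.s k * S.s l) ^ m = 1 := by rw [← hm]; exact pow_orderOf_eq_one _
  have hmin : ∀ j, 0 < j → j < m → (S.s k * S.s l) ^ j ≠ 1 := by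
    intro j hj hjm h
    have := orderOf_le_of_pow_eq_one hj h
    rw [mOrd] at hm
    omega
  have hT1 : sd S k * sd S l ≠ 1 := by
    intro h
    apply hmin 1 one_pos (by omega)
    rw [← T_one_iff, pow_one, h]
  obtain ⟨ζ, θ, hζ1, hζ, hl, hp, hr⟩ := exists_zeta S k l m h0 ((T_one_iff S k l m).2 hpow) hT1
  have hprim : ∀ j, 0 < j → j < m → ζ ^ j ≠ 1 := fun j hj hjm h =>
    hmin j hj hjm ((T_one_iff S k l j).1 (zeta_prim S k l ζ θ hζ1 hζ hl hp hr j h))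
  obtain ⟨z, hz⟩ : ∃ z, z = lin θ := ⟨_, rfl⟩
  obtain ⟨zb, hzb⟩ : ∃ z, z = lin (sd S k θ) := ⟨_, rfl⟩
  have hk1 : glAct ((S.s k : S.Γ) : GL (Fin d) ℂ) z = zb := by rw [hz, hzb, sd_lin]
  have hk2 : glAct ((S.s k : S.Γ) : GL (Fin d) ℂ) zb = z := by rw [← hk1, act_act]
  have hl1 : glAct ((S.s l : S.Γ) : GL (Fin d) ℂ) z = C ζ * zb := by
    rw [hz, hzb, ← sd_lin, hl, lin_smul, smul_eq_C_mul]
  have hl2 : glAct ((S.s l : S.Γ) : GL (Fin d) ℂ) zb = C ζ⁻¹ * z := by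
    have h := congrArg (glAct ((S.s l : S.Γ) : GL (Fin d) ℂ)) hl1
    rw [act_act, ← smul_eq_C_mul, map_smul] at h
    rw [h, ← smul_eq_C_mul, smul_smul, inv_mul_cancel₀ hζ, one_smul]
  have hαk : C (θ (S.coroot k)) * lin (S.α k) = z - zb := by
    rw [← hk1, hz, act_lin, smul_eq_C_mul]; ring
  have hαl : C (θ (S.coroot l)) * lin (S.α l) = z - C ζ * zb := by
    rw [← hl1, hz, act_lin, smul_eq_C_mul]; ring
  have hq : ∀ c : ℂ, c ≠ 0 → ¬ (z * zb ∣ (C c : Ad d)) := by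
    rintro c hc ⟨r, hr⟩
    have := congrArg (MvPolynomial.eval 0) hr
    rw [eval_C, map_mul, map_mul, hz, lin_eval] at this
    simp at this
    exact hc this
  have ch := chain S D hD k l z zb _ _ ζ hp hr hζ hαk hαl hk1 hk2 hl1 hl2 hq m hprim
  have hom : ∀ j (c : ℂ), (z^j + C c * zb^j).totalDegree ≤ j := by
    intro j c
    apply IsHomogeneous.totalDegree_le
    have a1 : (z^j).IsHomogeneous j := by simpa [hz] using (lin_homog θ).pow j
    have a2 : (zb^j).IsHomogeneous j := by simpa [hzb] using (lin_homog (sd S k θ)).pow j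
    have a3 := (isHomogeneous_C (Fin d) c).mul a2
    rw [zero_add] at a3
    exact a1.add a3
  have nz : ∀ f : Ad d, ¬ (z * zb ∣ f) → f ≠ 0 := fun f h h' => h (h' ▸ dvd_zero _)
  refine ⟨?_, ?_⟩
  · intro j hj hjm
    obtain ⟨c1, c2, -, -⟩ := ch j hjm
    have e1 : revAlt (DL S D hD k) (DL S D hD l) j (z^j + zb^j) = 0 := by
      obtain ⟨i, rfl⟩ : ∃ i, j = i + 1 := ⟨j - 1, by omega⟩
      rw [revAlt, Module.End.mul_apply, DL_inv S D hD, map_zero]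
      rw [map_add, map_pow, map_pow, hk1, hk2, add_comm]
    have e2 : revAlt (DL S D hD l) (DL S D hD k) j (z^j + C (ζ^j) * zb^j) = 0 := by
      obtain ⟨i, rfl⟩ : ∃ i, j = i + 1 := ⟨j - 1, by omega⟩
      rw [revAlt, Module.End.mul_apply, DL_inv S D hD, map_zero]
      have hinv : (C ζ : Ad d) ^ (i+1) * C ζ⁻¹ ^ (i+1) = 1 := by
        rw [← mul_pow, ← C_mul, mul_inv_cancel₀ hζ, C_1, one_pow]
      have hC : glAct ((S.s l : S.Γ) : GL (Fin d) ℂ) (C (ζ^(i+1))) = C (ζ^(i+1)) := by simp [glAct]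
      rw [map_add, map_mul, hC, map_pow (glAct _) z, map_pow (glAct _) zb, hl1, hl2, mul_pow, mul_pow, C_pow]
      linear_combination z^(i+1) * hinv
    have d1 := hom j 1
    rw [C_1, one_mul] at d1
    have d2 := hom j (ζ^j)
    simp only [altProd_eq_revAlt]
    by_cases he : Even j
    · simp only [if_pos he]
      exact ⟨_, _, d1, d2, nz _ c1, e1, e2, nz _ c2⟩
    · simp only [if_neg he]
      exact ⟨_, _, d2, d1, nz _ c2, e2, e1, nz _ c1⟩
  · obtain ⟨j, rfl⟩ : ∃ i, m = i + 1 := ⟨m - 1, by omega⟩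
    obtain ⟨-, -, c1, c2⟩ := ch j (by omega)
    have d1 := hom (j+1) 0
    rw [C_0, zero_mul, add_zero] at d1
    refine ⟨z^(j+1), d1, ?_⟩
    rw [altProd_eq_revAlt]
    split_ifs
    · exact nz _ c1
    · exact nz _ c2

end Test

section Rel
variable {d n : ℕ} (S : CoxeterSetup d n)

theorem act_eq (D : Fin n → Ad d → Ad d)
    (hD : ∀ (i : Fin n) (f : Ad d),
      lin (S.α i) * D i f = f - glAct ((S.s i : S.Γ) : GL (Fin d) ℂ) f) (i : Fin n) :
    1 - (Algebra.lmul ℂ (Ad d)).toRingHom (lin (S.α i)) * DL S D hD i = actHom S (S.s i) := by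
  apply LinearMap.ext
  intro f
  have h := DL_spec S D hD i f
  change f - lin (S.α i) * DL S D hD i f = glAct ((S.s i : S.Γ) : GL (Fin d) ℂ) f
  rw [h]; ring

theorem braid_rel (D : Fin n → Ad d → Ad d)
    (hD : ∀ (i : Fin n) (f : Ad d),
      lin (S.α i) * D i f = f - glAct ((S.s i : S.Γ) : GL (Fin d) ℂ) f)
    (k l : Fin n) (m : ℕ) (hm : mOrd S k l = m) (f : Ad d) :
    ∑ j ∈ Finset.range (m+1),
      (((cf S k l m j).1 - (cf S l k m j).2) * altProd (DL S D hD k) (DL S D hD l) j f +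
       ((cf S k l m j).2 - (cf S l k m j).1) * altProd (DL S D hD l) (DL S D hD k) j f) = 0 := by
  have hs : ∀ i f, (1 - (Algebra.lmul ℂ (Ad d)).toRingHom (lin (S.α i)) * DL S D hD i) *
      (Algebra.lmul ℂ (Ad d)).toRingHom f =
      (Algebra.lmul ℂ (Ad d)).toRingHom (glAct ((S.s i : S.Γ) : GL (Fin d) ℂ) f) *
        (1 - (Algebra.lmul ℂ (Ad d)).toRingHom (lin (S.α i)) * DL S D hD i) := by
    intro i f
    rw [act_eq]
    apply LinearMap.ext
    intro g
    exact map_mul (glAct ((S.s i : S.Γ) : GL (Fin d) ℂ)) f g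
  have e1 := expand S (Algebra.lmul ℂ (Ad d)).toRingHom (DL S D hD) (DL_sq S D hD) hs k l m
  have e2 := expand S (Algebra.lmul ℂ (Ad d)).toRingHom (DL S D hD) (DL_sq S D hD) hs l k m
  rw [act_eq, act_eq, ← altProd_map] at e1 e2
  have hb : altProd (S.s k) (S.s l) m = altProd (S.s l) (S.s k) m := by
    rw [altProd_pow _ _ (s_sq S k) (s_sq S l), ← hm, mOrd, pow_orderOf_eq_one, one_mul]
  rw [hb, e2] at e1
  have h := LinearMap.congr_fun e1 f
  simp only [LinearMap.sum_apply] at h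
  rw [eq_comm, ← sub_eq_zero, ← Finset.sum_sub_distrib] at h
  rw [← h]
  apply Finset.sum_congr rfl
  intro j _
  change _ = ((cf S k l m j).1 * altProd (DL S D hD k) (DL S D hD l) j f +
    (cf S k l m j).2 * altProd (DL S D hD l) (DL S D hD k) j f) -
    ((cf S l k m j).1 * altProd (DL S D hD l) (DL S D hD k) j f +
    (cf S l k m j).2 * altProd (DL S D hD k) (DL S D hD l) j f)
  ring

theorem coef_zero (D : Fin n → Ad d → Ad d)
    (hD : ∀ (i : Fin n) (f : Ad d),
      lin (S.α i) * D i f = f - glAct ((S.s i : S.Γ) : GL (Fin d) ℂ) f)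
    (k l : Fin n) (m : ℕ) (hm : mOrd S k l = m) (h0 : 0 < m) (j : ℕ) (hj0 : 0 < j) (hj : j < m) :
    (cf S k l m j).1 - (cf S l k m j).2 = 0 ∧ (cf S k l m j).2 - (cf S l k m j).1 = 0 := by
  induction j using Nat.strong_induction_on with
  | _ j ih =>
  have key : ∀ f : Ad d, f.totalDegree ≤ j →
      ((cf S k l m j).1 - (cf S l k m j).2) * altProd (DL S D hD k) (DL S D hD l) j f +
       ((cf S k l m j).2 - (cf S l k m j).1) * altProd (DL S D hD l) (DL S D hD k) j f = 0 := by
    intro f hf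
    rw [← braid_rel S D hD k l m hm f]
    symm
    apply Finset.sum_eq_single j
    · intro i _ hij
      rcases Nat.eq_zero_or_pos i with rfl | hi
      · simp [cf_zero, altProd]
      rcases lt_or_gt_of_ne hij with h | h
      · obtain ⟨a, b⟩ := ih i h hi (by omega)
        rw [a, b]; ring
      · rw [altDL_zero S D hD k l i f (by omega), altDL_zero S D hD l k i f (by omega)]; ring
    · intro h; simp at h; omega
  obtain ⟨f, g, hf, hg, h1, h2, h3, h4⟩ := (exists_test S D hD k l m hm h0).1 j hj0 hj
  have kf := key f hf
  have kg := key g hg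
  rw [h2, mul_zero, add_zero] at kf
  rw [h3, mul_zero, zero_add] at kg
  exact ⟨(mul_eq_zero.1 kf).resolve_right h1, (mul_eq_zero.1 kg).resolve_right h4⟩

/-- `Δ` for general length. -/
def Dl (k l : Fin n) (m : ℕ) : Ad d := ∏ j ∈ Finset.range m, rootSeqP S k l j

theorem coef_top (k l : Fin n) (m : ℕ) (h0 : 0 < m) :
    (cf S k l m m).1 - (cf S l k m m).2 = (-1)^m * Dl S k l m ∧
    (cf S k l m m).2 - (cf S l k m m).1 = - ((-1)^m * Dl S l k m) := by
  rw [cf_lead, cf_lead, (cf_large S k l m).2 m h0 le_rfl, (cf_large S l k m).2 m h0 le_rfl]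
  simp [Dl]

theorem mOrd_pos (k l : Fin n) : 0 < mOrd S k l := by
  haveI := S.finite
  exact orderOf_pos _

theorem Dl_prop (D : Fin n → Ad d → Ad d)
    (hD : ∀ (i : Fin n) (f : Ad d),
      lin (S.α i) * D i f = f - glAct ((S.s i : S.Γ) : GL (Fin d) ℂ) f)
    (k l : Fin n) (m : ℕ) (hm : mOrd S k l = m) (h0 : 0 < m) :
    ∃ c : ℂ, Dl S k l m = MvPolynomial.C c * Dl S l k m := by
  obtain ⟨f, hf, hne⟩ := (exists_test S D hD k l m hm h0).2
  have h := braid_rel S D hD k l m hm f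
  rw [Finset.sum_eq_single m, (coef_top S k l m h0).1, (coef_top S k l m h0).2] at h
  · have c1 : ∀ k l, ∃ c, altProd (DL S D hD k) (DL S D hD l) m f = MvPolynomial.C c := by
      intro k l
      rcases altDL_deg S D hD k l m f with h | h
      · exact ⟨0, by rw [h, MvPolynomial.C_0]⟩
      · exact ⟨_, MvPolynomial.totalDegree_eq_zero_iff_eq_C.1 (by omega)⟩
    obtain ⟨a, ha⟩ := c1 k l
    obtain ⟨b, hb⟩ := c1 l k
    rw [ha] at hne
    have ha0 : a ≠ 0 := by rintro rfl; simp at hne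
    rw [ha, hb] at h
    have hinv : (MvPolynomial.C a⁻¹ : Ad d) * MvPolynomial.C a = 1 := by
      rw [← MvPolynomial.C_mul, inv_mul_cancel₀ ha0, MvPolynomial.C_1]
    have hsq : ((-1 : Ad d)^m) * (-1)^m = 1 := by rw [← mul_pow]; simp
    refine ⟨a⁻¹ * b, ?_⟩
    rw [MvPolynomial.C_mul]
    linear_combination (MvPolynomial.C a⁻¹ * (-1)^m) * h - Dl S k l m * hinv -
      (Dl S k l m * MvPolynomial.C a⁻¹ * MvPolynomial.C a -
        MvPolynomial.C a⁻¹ * Dl S l k m * MvPolynomial.C b) * hsq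
  · intro i hi him
    rcases Nat.eq_zero_or_pos i with rfl | hi0
    · simp [cf_zero, altProd]
    · simp at hi
      obtain ⟨a, b⟩ := coef_zero S D hD k l m hm h0 i hi0 (by omega)
      rw [a, b]; ring
  · intro h; simp at h

theorem relator_eq (D : Fin n → Ad d → Ad d)
    (hD : ∀ (i : Fin n) (f : Ad d),
      lin (S.α i) * D i f = f - glAct ((S.s i : S.Γ) : GL (Fin d) ℂ) f)
    (k l : Fin n) (m : ℕ) (hm : mOrd S k l = m) (h0 : 0 < m) :
    altProd (sigmaD S k) (sigmaD S l) m - altProd (sigmaD S l) (sigmaD S k) m =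
      ofA S ((-1)^m * Dl S k l m) * altProd (GG S k) (GG S l) m +
      ofA S (-((-1)^m * Dl S l k m)) * altProd (GG S l) (GG S k) m := by
  have e1 := expand S (ofA S) (GG S) (GG_sq S) (sigma_straight S D hD) k l m
  have e2 := expand S (ofA S) (GG S) (GG_sq S) (sigma_straight S D hD) l k m
  unfold sigmaD
  rw [e1, e2, ← Finset.sum_sub_distrib]
  have e3 : ∀ j, ofA S (cf S k l m j).1 * altProd (GG S k) (GG S l) j +
        ofA S (cf S k l m j).2 * altProd (GG S l) (GG S k) j -
        (ofA S (cf S l k m j).1 * altProd (GG S l) (GG S k) j +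
        ofA S (cf S l k m j).2 * altProd (GG S k) (GG S l) j) =
      ofA S ((cf S k l m j).1 - (cf S l k m j).2) * altProd (GG S k) (GG S l) j +
      ofA S ((cf S k l m j).2 - (cf S l k m j).1) * altProd (GG S l) (GG S k) j := by
    intro j
    simp only [map_sub, sub_mul]; abel
  rw [Finset.sum_congr rfl (fun j _ => e3 j), Finset.sum_eq_single m, (coef_top S k l m h0).1,
    (coef_top S k l m h0).2]
  · intro i hi him
    rcases Nat.eq_zero_or_pos i with rfl | hi0
    · simp [cf_zero, altProd]
    · simp at hi
      obtain ⟨a, b⟩ := coef_zero S D hD k l m hm h0 i hi0 (by omega)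
      rw [a, b]; simp
  · intro h; simp at h

theorem base_mem (D : Fin n → Ad d → Ad d)
    (hD : ∀ (i : Fin n) (f : Ad d),
      lin (S.α i) * D i f = f - glAct ((S.s i : S.Γ) : GL (Fin d) ℂ) f)
    (k l : Fin n) (hkl : k ≠ l) (N : ℕ) (hN : 1 ≤ N) :
    ofA S (DeltaP S k l) * altProd (GG S k) (GG S l) (mOrd S k l + N) ∈
      TwoSidedIdeal.span (coxeterBraidSet S) ∧
    ofA S (DeltaP S k l) * altProd (GG S l) (GG S k) (mOrd S k l + N) ∈
      TwoSidedIdeal.span (coxeterBraidSet S) := by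
  obtain ⟨m, hm⟩ : ∃ m, mOrd S k l = m := ⟨_, rfl⟩
  have h0 : 0 < m := hm ▸ mOrd_pos S k l
  have hB : altProd (sigmaD S k) (sigmaD S l) m - altProd (sigmaD S l) (sigmaD S k) m ∈
      TwoSidedIdeal.span (coxeterBraidSet S) :=
    TwoSidedIdeal.subset_span ⟨k, l, hkl, by rw [hm]⟩
  rw [relator_eq S D hD k l m hm h0] at hB
  have hsgn : ((-1 : Ad d)^m) * (-1)^m = 1 := by rw [← mul_pow]; simp
  have b1 : ofA S (Dl S k l m) * altProd (GG S k) (GG S l) (m+1) ∈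
      TwoSidedIdeal.span (coxeterBraidSet S) := by
    have h := TwoSidedIdeal.mul_mem_left _ (ofA S ((-1)^m)) _
      (TwoSidedIdeal.mul_mem_right _ _ (if Even m then GG S k else GG S l) hB)
    rw [add_mul, mul_assoc, ← altProd_right, mul_assoc,
      altProd_last_zero _ _ (GG_sq S k) (GG_sq S l) m h0, mul_zero, add_zero, ← mul_assoc,
      ← map_mul, ← mul_assoc, hsgn, one_mul] at h
    exact h
  have b2 : ofA S (Dl S l k m) * altProd (GG S l) (GG S k) (m+1) ∈
      TwoSidedIdeal.span (coxeterBraidSet S) := by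
    have h := TwoSidedIdeal.mul_mem_left _ (ofA S (-(-1)^m)) _
      (TwoSidedIdeal.mul_mem_right _ _ (if Even m then GG S l else GG S k) hB)
    rw [add_mul, mul_assoc, mul_assoc _ (altProd (GG S l) (GG S k) m), ← altProd_right,
      altProd_last_zero _ _ (GG_sq S l) (GG_sq S k) m h0, mul_zero, zero_add, ← mul_assoc, ← map_mul, neg_mul_neg, ← mul_assoc, hsgn, one_mul] at h
    exact h
  have b3 : ofA S (Dl S k l m) * altProd (GG S l) (GG S k) (m+1) ∈
      TwoSidedIdeal.span (coxeterBraidSet S) := by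
    obtain ⟨c, hc⟩ := Dl_prop S D hD k l m hm h0
    rw [hc, map_mul, mul_assoc]
    exact TwoSidedIdeal.mul_mem_left _ _ _ b2
  have hΔ : DeltaP S k l = Dl S k l m := by rw [DeltaP, Dl, hm]
  rw [hΔ, hm]
  obtain ⟨i, rfl⟩ : ∃ i, N = 1 + i := ⟨N - 1, by omega⟩
  rw [← add_assoc]
  constructor
  · obtain ⟨t, ht⟩ := altProd_add (GG S k) (GG S l) (m+1) i
    rw [ht, ← mul_assoc]
    exact TwoSidedIdeal.mul_mem_right _ _ _ b1
  · obtain ⟨t, ht⟩ := altProd_add (GG S l) (GG S k) (m+1) i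
    rw [ht, ← mul_assoc]
    exact TwoSidedIdeal.mul_mem_right _ _ _ b3

theorem xi_step (D : Fin n → Ad d → Ad d)
    (hD : ∀ (i : Fin n) (f : Ad d),
      lin (S.α i) * D i f = f - glAct ((S.s i : S.Γ) : GL (Fin d) ℂ) f)
    (I : TwoSidedIdeal (DD S)) (t u : Fin n) (m : ℕ) (f : Ad d)
    (hf : ∀ N, 1 ≤ N → ofA S f * altProd (GG S t) (GG S u) (m + N) ∈ I ∧
      ofA S f * altProd (GG S u) (GG S t) (m + N) ∈ I) :
    ∀ N, 1 ≤ N → ofA S (D t f) * altProd (GG S t) (GG S u) (m + N) ∈ I ∧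
      ofA S (D t f) * altProd (GG S u) (GG S t) (m + N) ∈ I := by
  have h1 : ∀ N, 1 ≤ N → ofA S (D t f) * altProd (GG S t) (GG S u) (m + N) ∈ I := by
    intro N hN
    have h := TwoSidedIdeal.mul_mem_left _ (GG S t) _ (hf N hN).1
    obtain ⟨j, hj⟩ : ∃ j, m + N = j + 1 := ⟨m + N - 1, by omega⟩
    rw [← mul_assoc, GG_straight S D hD, add_mul, mul_assoc _ (GG S t), hj, altProd,
      ← mul_assoc (GG S t) (GG S t), GG_sq, zero_mul, mul_zero, add_zero] at h
    rw [hj, altProd]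
    exact h
  intro N hN
  refine ⟨h1 N hN, ?_⟩
  have h := TwoSidedIdeal.mul_mem_left _ (GG S t) _ (hf N hN).2
  have e : GG S t * altProd (GG S u) (GG S t) (m + N) =
    altProd (GG S t) (GG S u) (m + (N + 1)) := rfl
  rw [← mul_assoc, GG_straight S D hD, add_mul, mul_assoc _ (GG S t), e] at h
  have hs : glAct ((S.s t : S.Γ) : GL (Fin d) ℂ) f = f - lin (S.α t) * D t f := by
    rw [hD]; ring
  rw [hs, map_sub, sub_mul, map_mul, mul_assoc (ofA S (lin (S.α t)))] at h
  have h2 := I.sub_mem h (I.sub_mem (hf (N+1) (by omega)).1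
    (TwoSidedIdeal.mul_mem_left I (ofA S (lin (S.α t))) _ (h1 (N+1) (by omega))))
  rw [add_sub_cancel_right] at h2
  exact h2

end Rel

/-- Lemma 3. For `k ≠ l`, `m = m_{kl}`, any `N ≥ 1` and any composition
`Ξ` of Demazure operators `D_k`, `D_l`, the elements `Ξ(Δ_{k,l})·G_kG_lG_k⋯` and
`Ξ(Δ_{k,l})·G_lG_kG_l⋯` (alternating products with `m + N` factors) lie in the two-sided
ideal generated by the Coxeter braid relators. -/
theorem xi_delta_mul_long_altProd_mem_braid_ideal {d n : ℕ} (S : CoxeterSetup d n)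
    (k l : Fin n) (hkl : k ≠ l)
    (D : Fin n → Ad d → Ad d)
    (hD : ∀ (i : Fin n) (f : Ad d),
      lin (S.α i) * D i f = f - glAct ((S.s i : S.Γ) : GL (Fin d) ℂ) f)
    (Ξ : List (Fin n)) (hΞ : ∀ t ∈ Ξ, t = k ∨ t = l)
    (N : ℕ) (hN : 1 ≤ N) :
    ofA S (Ξ.foldr (fun t x => D t x) (DeltaP S k l)) *
        altProd (GG S k) (GG S l) (mOrd S k l + N) ∈
      TwoSidedIdeal.span (coxeterBraidSet S) ∧
    ofA S (Ξ.foldr (fun t x => D t x) (DeltaP S k l)) *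
        altProd (GG S l) (GG S k) (mOrd S k l + N) ∈
      TwoSidedIdeal.span (coxeterBraidSet S) := by
  induction Ξ generalizing N with
  | nil => exact base_mem S D hD k l hkl N hN
  | cons t Ξ ih =>
    have ih' := ih (fun t ht => hΞ t (List.mem_cons_of_mem _ ht))
    rw [List.foldr_cons]
    rcases hΞ t List.mem_cons_self with rfl | rfl
    · exact xi_step S D hD _ t l _ _ ih' N hN
    · exact (xi_step S D hD _ t k _ _ (fun N hN => (ih' N hN).symm) N hN).symm
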